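/- arXiv:1404.0422 — 3 statements merged into one kernel-verified Lean document; each statement's English description precedes it below -/
import Mathlib

section
/- Fix x ∈ ℝ and t > 0. The pushforward of the Gaussian measure gaussianReal x t under the absolute value map y ↦ |y| is absolutely continuous with respect to Lebesgue measure on [0, ∞), with density y ↦ (1/√(2πt))·(exp(−(y−x)²/(2t)) + exp(−(y+x)²/(2t))) for y ≥ 0; equivalently, for every Borel set A ⊆ [0, ∞), (gaussianReal x t) {y : |y| ∈ A} = ∫_A (1/√(2πt))·(exp(−(y−x)²/(2t)) + exp(−(y+x)²/(2t))) dy. (This is the transition density p^R(s, x; t, y) of reflected Brownian motion.) -/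
open MeasureTheory ProbabilityTheory Real NNReal

/-- The pushforward of the Gaussian measure `gaussianReal x t` under `y ↦ |y|` has density
`y ↦ (1/√(2πt))·(exp(−(y−x)²/(2t)) + exp(−(y+x)²/(2t)))` on `[0, ∞)` with respect to
Lebesgue measure: this is the transition density of reflected Brownian motion. -/
theorem reflected_gaussian_density (x : ℝ) (t : ℝ≥0) (ht : 0 < t)
    (A : Set ℝ) (hA : MeasurableSet A) (hA0 : A ⊆ Set.Ici 0) :
    (gaussianReal x t) {y : ℝ | |y| ∈ A} =
      ENNReal.ofReal (∫ y in A,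
        (1 / Real.sqrt (2 * Real.pi * t)) *
          (Real.exp (-(y - x) ^ 2 / (2 * t)) + Real.exp (-(y + x) ^ 2 / (2 * t)))) := by
  have hv : t ≠ 0 := ht.ne'
  have hset : {y : ℝ | |y| ∈ A} = A ∪ (fun y : ℝ => -y) ⁻¹' A := by
    ext y
    simp only [Set.mem_setOf_eq, Set.mem_union, Set.mem_preimage]
    constructor
    · intro h
      rcases abs_choice y with h' | h'
      · left; rwa [h'] at h
      · right; rwa [h'] at h
    · rintro (h | h)
      · have := hA0 h
        rwa [abs_of_nonneg this]
      · have h2 : 0 ≤ -y := hA0 h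
        rwa [abs_of_nonpos (by linarith)]
  have hmN : MeasurableSet ((fun y : ℝ => -y) ⁻¹' A) := measurable_neg hA
  have hdisj : AEDisjoint (gaussianReal x t) A ((fun y : ℝ => -y) ⁻¹' A) := by
    have h0 : (gaussianReal x t) {0} = 0 :=
      gaussianReal_absolutelyContinuous x hv (by simp)
    refine measure_mono_null ?_ h0
    rintro y ⟨h1, h2⟩
    have h1' : 0 ≤ y := hA0 h1
    have h2' : 0 ≤ -y := hA0 h2
    simp only [Set.mem_singleton_iff]
    linarith
  have hneg : (gaussianReal x t) ((fun y : ℝ => -y) ⁻¹' A) = gaussianReal (-x) t A := by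
    rw [← gaussianReal_map_neg, Measure.map_apply measurable_neg hA]
  rw [hset, measure_union₀ hmN.nullMeasurableSet hdisj, hneg,
    gaussianReal_apply_eq_integral _ hv, gaussianReal_apply_eq_integral _ hv,
    ← ENNReal.ofReal_add
      (integral_nonneg fun y => gaussianPDFReal_nonneg _ _ y)
      (integral_nonneg fun y => gaussianPDFReal_nonneg _ _ y),
    ← integral_add (integrable_gaussianPDFReal _ _).integrableOn
      (integrable_gaussianPDFReal _ _).integrableOn]
  congr 2
  ext y
  simp only [gaussianPDFReal, sub_neg_eq_add, one_div, mul_add]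
end

section
/- The family n ↦ (−1)^n · exp(−2√2·n²) · cosh(2√2·n), indexed by n ∈ ℤ, is summable, and its sum over all n ∈ ℤ equals 0: ∑_{n∈ℤ} (−1)^n exp(−√8·n²) cosh(√8·n) = 0. -/
open Real

lemma aux_summable (c : ℝ) (hc : 0 < c) :
    Summable (fun n : ℤ => (-1 : ℝ) ^ n * Real.exp (-c * (n : ℝ) ^ 2 + c * n)) := by
  have h := (summable_jacobiTheta₂_term_iff (⟨0, -c / (2 * π)⟩ : ℂ) (⟨0, c / π⟩ : ℂ)).2
    (by simpa using div_pos hc Real.pi_pos)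
  refine Summable.of_norm ?_
  refine h.norm.congr fun n => ?_
  rw [norm_jacobiTheta₂_term, norm_mul, norm_zpow, norm_neg, norm_one, one_zpow, one_mul,
    Real.norm_of_nonneg (Real.exp_pos _).le]
  congr 1
  have := Real.pi_pos.ne'
  field_simp
  ring

lemma aux_hasSum (c : ℝ) (hc : 0 < c) :
    HasSum (fun n : ℤ => (-1 : ℝ) ^ n * Real.exp (-c * (n : ℝ) ^ 2 + c * n)) 0 := by
  have hs := (aux_summable c hc).hasSum
  have h2 := (Equiv.subLeft (1 : ℤ)).hasSum_iff.2 hs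
  have h3 : ((fun n : ℤ => (-1 : ℝ) ^ n * Real.exp (-c * (n : ℝ) ^ 2 + c * n)) ∘
      (Equiv.subLeft (1 : ℤ))) =
      fun n : ℤ => -((-1 : ℝ) ^ n * Real.exp (-c * (n : ℝ) ^ 2 + c * n)) := by
    funext n
    simp only [Function.comp, Equiv.subLeft_apply]
    rw [zpow_sub₀ (by norm_num), zpow_one, div_eq_mul_inv, ← inv_zpow, inv_neg, inv_one]
    push_cast
    rw [show -c * (1 - (n : ℝ)) ^ 2 + c * (1 - n) = -c * (n : ℝ) ^ 2 + c * n by ring]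
    ring
  rw [h3] at h2
  have h4 := hs.neg.unique h2
  have h5 : (∑' n : ℤ, (-1 : ℝ) ^ n * Real.exp (-c * (n : ℝ) ^ 2 + c * n)) = 0 := by linarith
  rwa [h5] at hs

theorem alternating_theta_sum_zero :
    Summable (fun n : ℤ =>
      (-1 : ℝ) ^ n * Real.exp (-Real.sqrt 8 * (n : ℝ) ^ 2) * Real.cosh (Real.sqrt 8 * n)) ∧
    (∑' n : ℤ,
      (-1 : ℝ) ^ n * Real.exp (-Real.sqrt 8 * (n : ℝ) ^ 2) * Real.cosh (Real.sqrt 8 * n)) = 0 := by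
  have h := aux_hasSum (Real.sqrt 8) (by positivity)
  have h2 := (Equiv.neg ℤ).hasSum_iff.2 h
  have h3 := (h.add h2).div_const 2
  have h4 : HasSum (fun n : ℤ =>
      (-1 : ℝ) ^ n * Real.exp (-Real.sqrt 8 * (n : ℝ) ^ 2) * Real.cosh (Real.sqrt 8 * n)) 0 := by
    convert h3 using 1
    · rfl
    · funext n
      simp only [Function.comp, Equiv.neg_apply, Real.cosh_eq, Int.cast_neg, zpow_neg, neg_sq,
        Real.exp_add, mul_neg, ← inv_zpow, inv_neg, inv_one]
      ring
    · simp
  exact ⟨h4.summable, h4.tsum_eq⟩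
end

section
/- Let a < b be real numbers, r ∈ (0, 1), ε ∈ (0, (b−a)/2), t > 0, and s ∈ [rt, t). Let μ := gaussianReal 0 (t−s). Then for every x ∈ ℝ with (a+ε)·t ≤ x ≤ (b−ε)·t, the product of Gaussian tails satisfies μ([x − at, ∞)) · μ([bt − x, ∞)) ≤ (1/(2π·ε²·t)) · exp( −(b−a)²·t / (4(1−r)) ). -/
open MeasureTheory ProbabilityTheory Real

lemma gauss_tail_aux (v y : ℝ) (hv : 0 < v) (hy : 0 < y) :
    gaussianReal 0 (Real.toNNReal v) (Set.Ici y) ≤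
      ENNReal.ofReal ((√(2 * π * v))⁻¹ * (v / y) * Real.exp (-y ^ 2 / (2 * v))) := by
  have hv' : Real.toNNReal v ≠ 0 := by simpa using hv
  rw [gaussianReal_apply_eq_integral 0 hv']
  apply ENNReal.ofReal_le_ofReal
  rw [integral_Ici_eq_integral_Ioi]
  have hc : -(y / v) < 0 := by simp; positivity
  have hI := integrableOn_exp_mul_Ioi hc y
  calc ∫ u in Set.Ioi y, gaussianPDFReal 0 (Real.toNNReal v) u
      ≤ ∫ u in Set.Ioi y, ((√(2 * π * v))⁻¹ * Real.exp (y ^ 2 / (2 * v))) * Real.exp (-(y / v) * u) := by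
        apply setIntegral_mono (integrable_gaussianPDFReal _ _).integrableOn (hI.const_mul _)
        intro u
        simp only [gaussianPDFReal, Real.coe_toNNReal v hv.le, mul_assoc, ← Real.exp_add]
        gcongr
        have : y ^ 2 / (2 * v) + -(y / v) * u - -(u - 0) ^ 2 / (2 * v) = (u - y) ^ 2 / (2 * v) := by
          field_simp; ring
        have h2 : 0 ≤ (u - y) ^ 2 / (2 * v) := by positivity
        linarith
    _ = _ := by
        rw [integral_const_mul, integral_exp_mul_Ioi hc]
        have : Real.exp (-y ^ 2 / (2 * v)) = Real.exp (y ^ 2 / (2 * v)) * Real.exp (-(y / v) * y) := by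
          rw [← Real.exp_add]; congr 1; field_simp; ring
        rw [this]
        field_simp

theorem gaussian_tail_product_bound (a b : ℝ) (hab : a < b)
    (r : ℝ) (hr : r ∈ Set.Ioo (0 : ℝ) 1)
    (ε : ℝ) (hε : ε ∈ Set.Ioo (0 : ℝ) ((b - a) / 2))
    (t : ℝ) (ht : 0 < t) (s : ℝ) (hs : s ∈ Set.Ico (r * t) t)
    (x : ℝ) (hx : (a + ε) * t ≤ x ∧ x ≤ (b - ε) * t) :
    (gaussianReal 0 (Real.toNNReal (t - s))) (Set.Ici (x - a * t)) *
        (gaussianReal 0 (Real.toNNReal (t - s))) (Set.Ici (b * t - x)) ≤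
      ENNReal.ofReal ((1 / (2 * Real.pi * ε ^ 2 * t)) *
        Real.exp (-(b - a) ^ 2 * t / (4 * (1 - r)))) := by
  obtain ⟨hr0, hr1⟩ := hr
  obtain ⟨hε0, -⟩ := hε
  obtain ⟨hs1, hs2⟩ := hs
  obtain ⟨hx1, hx2⟩ := hx
  have hv : 0 < t - s := by linarith
  have hvr : t - s ≤ (1 - r) * t := by linarith
  have hvt : t - s ≤ t := by nlinarith
  have hεt : 0 < ε * t := by positivity
  have hy : ε * t ≤ x - a * t := by linarith
  have hz : ε * t ≤ b * t - x := by linarith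
  have hsum : (x - a * t) + (b * t - x) = (b - a) * t := by ring
  generalize x - a * t = y at *
  generalize b * t - x = z at *
  generalize t - s = v at *
  have hy0 : 0 < y := by linarith
  have hz0 : 0 < z := by linarith
  have hr' : 0 < 1 - r := by linarith
  refine (mul_le_mul' (gauss_tail_aux v y hv hy0) (gauss_tail_aux v z hv hz0)).trans ?_
  rw [← ENNReal.ofReal_mul (by positivity)]
  apply ENNReal.ofReal_le_ofReal
  have hsq : (√(2 * π * v))⁻¹ * (√(2 * π * v))⁻¹ = (2 * π * v)⁻¹ := by
    rw [← mul_inv, Real.mul_self_sqrt (by positivity)]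
  calc _ = ((√(2 * π * v))⁻¹ * (√(2 * π * v))⁻¹) * (v / y) * (v / z) *
        Real.exp (-y ^ 2 / (2 * v) + -z ^ 2 / (2 * v)) := by
        rw [Real.exp_add]; ring
    _ = (v / (2 * π * (y * z))) * Real.exp (-y ^ 2 / (2 * v) + -z ^ 2 / (2 * v)) := by
        rw [hsq]; field_simp
    _ ≤ _ := by
        apply mul_le_mul _ _ (by positivity) (by positivity)
        · calc v / (2 * π * (y * z)) ≤ t / (2 * π * ((ε * t) * (ε * t))) := by gcongr
            _ = _ := by field_simp
        · apply Real.exp_le_exp.mpr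
          have h1 : -y ^ 2 / (2 * v) + -z ^ 2 / (2 * v) =
              -((y + z) ^ 2 / (4 * v)) - (y - z) ^ 2 / (4 * v) := by field_simp; ring
          have h2 : 0 ≤ (y - z) ^ 2 / (4 * v) := by positivity
          have h3 : ((b - a) * t) ^ 2 / (4 * ((1 - r) * t)) ≤ (y + z) ^ 2 / (4 * v) := by
            rw [hsum]; gcongr
          have h4 : -(b - a) ^ 2 * t / (4 * (1 - r)) =
              -(((b - a) * t) ^ 2 / (4 * ((1 - r) * t))) := by field_simp
          linarith
end
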